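/- Well-formedness of day addition: for every valid date (y, m, d) and every integer n, the value reached by evaluating (y, m, d) +d n is not ⊥. -/

import Mathlib

/-- A value is either a date `(y, m, d)` (a triple of integers in the
Gregorian calendar) or the error element `⊥`. -/
inductive DValue : Type
  | date (y m d : ℤ) : DValue
  | bot : DValue
deriving DecidableEq

/-- `nb_days(y, m)`: the number of days of month `m` in year `y`
(meaningful for `1 ≤ m ≤ 12`). A year is leap iff it is divisible by 4
and not by 100, or divisible by 400. -/
def nbDays (y m : ℤ) : ℤ :=
  if m = 2 then (if (4 ∣ y ∧ ¬ (100 ∣ y)) ∨ 400 ∣ y then 29 else 28)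
  else if m = 4 ∨ m = 6 ∨ m = 9 ∨ m = 11 then 30
  else 31

theorem nbDays_bounds (y m : ℤ) : 28 ≤ nbDays y m ∧ nbDays y m ≤ 31 := by
  unfold nbDays; split_ifs <;> omega

/-- A date `(y, m, d)` is valid iff `1 ≤ m ≤ 12` and `1 ≤ d ≤ nb_days(y, m)`. -/
def ValidDate (y m d : ℤ) : Prop :=
  1 ≤ m ∧ m ≤ 12 ∧ 1 ≤ d ∧ d ≤ nbDays y m

/-- Year addition: `(y,m,d) +y n = (y+n,m,d)`; `⊥ +y n = ⊥`. -/
def DValue.addY : DValue → ℤ → DValue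
  | .date y m d, n => .date (y + n) m d
  | .bot, _ => .bot

/-- Month addition on a date `(y, m, d)` (with `⊥` for a month component
outside `[1,12]`):
`(y,m,d) +m n = (y,m+n,d)` if `1 ≤ m+n ≤ 12`,
`= (y+1,m,d) +m (n−12)` if `m+n > 12`, `= (y−1,m,d) +m (n+12)` if `m+n < 1`. -/
def addMonths (y m d n : ℤ) : DValue :=
  if _h : 1 ≤ m ∧ m ≤ 12 then
    if _h1 : 1 ≤ m + n ∧ m + n ≤ 12 then .date y (m + n) d
    else if _h2 : 12 < m + n then addMonths (y + 1) m d (n - 12)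
    else addMonths (y - 1) m d (n + 12)
  else .bot
termination_by (m + n - 12).toNat + (1 - (m + n)).toNat
decreasing_by all_goals omega

/-- Month addition on values: `⊥ +m n = ⊥`. -/
def DValue.addM : DValue → ℤ → DValue
  | .date y m d, n => addMonths y m d n
  | .bot, _ => .bot

/-- Day addition, following the rules:
for `(y,m,d)` with `1 ≤ d ≤ nb_days(y,m)`:
`(y,m,d) +d n = (y,m,d+n)` if `1 ≤ d+n ≤ nb_days(y,m)`;
`= ((y,m,1) +m 1) +d (n − (nb_days(y,m) − d) − 1)` if `d+n > nb_days(y,m)`;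
`= (y,m,1) +d (d−1+n)` if `d+n ≤ 0` and `d > 1`;
if `n+1 ≤ 0` then, letting `(y',m',d') = (y,m,1) +m (−1)`,
`(y,m,1) +d n = (y',m',1) +d (n + nb_days(y',m'))`.
If `d < 1` or `d > nb_days(y,m)` (or the month is out of range), the result is `⊥`. -/
def addDays (y m d n : ℤ) : DValue :=
  if _hm : 1 ≤ m ∧ m ≤ 12 then
    if _hd : 1 ≤ d ∧ d ≤ nbDays y m then
      if _h1 : 1 ≤ d + n ∧ d + n ≤ nbDays y m then .date y m (d + n)
      else if _h2 : nbDays y m < d + n then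
        match addMonths y m 1 1 with
        | .date y' m' _ => addDays y' m' 1 (n - (nbDays y m - d) - 1)
        | .bot => .bot
      else if _h3 : 1 < d then addDays y m 1 (d - 1 + n)
      else
        match _hprev : addMonths y m 1 (-1) with
        | .date y' m' _ => addDays y' m' 1 (n + nbDays y' m')
        | .bot => .bot
    else .bot
  else .bot
termination_by (if 0 ≤ n then n else 62 - n).toNat
decreasing_by
  · split_ifs <;> omega
  · split_ifs <;> omega
  · have h28 := nbDays_bounds y' m'
    split_ifs <;> omega

/-- Day addition on values: `⊥ +d n = ⊥`. -/
def DValue.addD : DValue → ℤ → DValue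
  | .date y m d, n => addDays y m d n
  | .bot, _ => .bot

/-- Rounding modes: down (`↓`), up (`↑`) and error (`⊥`). -/
inductive RMode : Type
  | down | up | err
deriving DecidableEq

/-- Rounding `rnd_r`: if `1 ≤ d ≤ nb_days(y,m)` then `rnd_r(y,m,d) = (y,m,d)`;
if `d > nb_days(y,m)` then `rnd_↓(y,m,d) = (y,m,nb_days(y,m))`,
`rnd_↑(y,m,d) = (y',m',1)` where `(y',m',d') = (y,m,d) +m 1`, and
`rnd_⊥(y,m,d) = ⊥`; if `d < 1` then `rnd_r(y,m,d) = ⊥`; `rnd_r(⊥) = ⊥`. -/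
def rnd (r : RMode) : DValue → DValue
  | .date y m d =>
    if 1 ≤ d ∧ d ≤ nbDays y m then .date y m d
    else if d < 1 then .bot
    else
      match r with
      | .down => .date y m (nbDays y m)
      | .up =>
        match addMonths y m d 1 with
        | .date y' m' _ => .date y' m' 1
        | .bot => .bot
      | .err => .bot
  | .bot => .bot

/-- A period `(py, pm, pd)`: a number of years, months and days. -/
structure Period : Type where
  py : ℤ
  pm : ℤ
  pd : ℤ
deriving DecidableEq

/-- Derived addition of a period with rounding mode `r`:
`e +r (py, pm, pd) = rnd_r((e +y py) +m pm) +d pd`. -/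
def addPeriod (r : RMode) (e : DValue) (p : Period) : DValue :=
  ((rnd r ((e.addY p.py).addM p.pm)).addD p.pd)

/-- Strict lexicographic order on dates. -/
def DateLt (y1 m1 d1 y2 m2 d2 : ℤ) : Prop :=
  y1 < y2 ∨ (y1 = y2 ∧ (m1 < m2 ∨ (m1 = m2 ∧ d1 < d2)))

/-- Large lexicographic order on dates. -/
def DateLe (y1 m1 d1 y2 m2 d2 : ℤ) : Prop :=
  y1 < y2 ∨ (y1 = y2 ∧ (m1 < m2 ∨ (m1 = m2 ∧ d1 ≤ d2)))

/-- Comparison lifted to values: it holds only between two dates. -/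
def DValue.lt : DValue → DValue → Prop
  | .date y1 m1 d1, .date y2 m2 d2 => DateLt y1 m1 d1 y2 m2 d2
  | _, _ => False

/-- Comparison lifted to values: it holds only between two dates. -/
def DValue.le : DValue → DValue → Prop
  | .date y1 m1 d1, .date y2 m2 d2 => DateLe y1 m1 d1 y2 m2 d2
  | _, _ => False

/-- A value is a valid date: it is not `⊥` and its components are valid. -/
def IsValidDate : DValue → Prop
  | .date y m d => ValidDate y m d
  | .bot => False

def yearOf : DValue → ℤ
  | .date y _ _ => y
  | .bot => 0

def monthOf : DValue → ℤ
  | .date _ m _ => m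
  | .bot => 0

def dayOf : DValue → ℤ
  | .date _ _ d => d
  | .bot => 0

/-- Date units: year, month, day. -/
inductive DUnit : Type
  | year | month | day
deriving DecidableEq

/-- Addition of `n` units to a value. -/
def addU : DUnit → DValue → ℤ → DValue
  | .year, v, n => v.addY n
  | .month, v, n => v.addM n
  | .day, v, n => v.addD n

/-- Componentwise addition of periods. -/
def Period.add (p q : Period) : Period :=
  ⟨p.py + q.py, p.pm + q.pm, p.pd + q.pd⟩

theorem one_le_nbDays (y m : ℤ) : 1 ≤ nbDays y m :=
  le_trans (by norm_num) (nbDays_bounds y m).1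

theorem validDate_first_day {m : ℤ} (y : ℤ) (hm : 1 ≤ m ∧ m ≤ 12) : ValidDate y m 1 :=
  ⟨hm.1, hm.2, le_rfl, one_le_nbDays y m⟩

theorem addMonths_ne_bot {m : ℤ} (y d n : ℤ) (hm : 1 ≤ m ∧ m ≤ 12) :
    addMonths y m d n ≠ .bot := by
  fun_induction addMonths y m d n with
  | case1 => exact DValue.noConfusion
  | case2 _ _ _ _ _ ih => exact ih
  | case3 _ _ _ _ _ ih => exact ih
  | case4 _ _ hm_out => exact absurd hm hm_out

theorem month_bounds_of_addMonths_eq_date {y m d n y' m' d' : ℤ}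
    (h : addMonths y m d n = .date y' m' d') : 1 ≤ m' ∧ m' ≤ 12 := by
  fun_induction addMonths y m d n with
  | case1 _ _ _ hmn =>
    cases h
    exact hmn
  | case2 _ _ _ _ _ ih => exact ih h
  | case3 _ _ _ _ _ ih => exact ih h
  | case4 => cases h

theorem IsValidDate.ne_bot {v : DValue} (hv : IsValidDate v) : v ≠ .bot := by
  rintro rfl
  exact hv

-- Every recursive call of `addDays` starts from the first day of a month, which is always valid.
theorem wellFormedness_day_addition_general (y m d n : ℤ) (h : ValidDate y m d) :
    IsValidDate (addDays y m d n) := by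
  fun_induction addDays y m d n with
  | case1 _ _ _ _ hm _ hdn => exact ⟨hm.1, hm.2, hdn⟩
  | case2 _ _ _ _ _ _ _ _ y' _ _ hnext ih =>
    exact ih (validDate_first_day y' (month_bounds_of_addMonths_eq_date hnext))
  | case3 y _ _ _ hm _ _ _ hnext => exact absurd hnext (addMonths_ne_bot y 1 1 hm)
  | case4 y _ _ _ hm _ _ _ _ ih => exact ih (validDate_first_day y hm)
  | case5 _ _ _ _ _ _ _ _ _ y' _ _ hprev ih =>
    exact ih (validDate_first_day y' (month_bounds_of_addMonths_eq_date hprev))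
  | case6 y _ _ _ hm _ _ _ _ hprev => exact absurd hprev (addMonths_ne_bot y 1 (-1) hm)
  | case7 _ _ _ _ _ hd_out => exact absurd h.2.2 hd_out
  | case8 _ _ _ _ hm_out => exact absurd ⟨h.1, h.2.1⟩ hm_out

/-- **Well-formedness of day addition**: for every valid date `(y, m, d)` and
every integer `n`, the value reached by evaluating `(y, m, d) +d n` is not `⊥`. -/
theorem wellFormedness_day_addition (y m d n : ℤ) (h : ValidDate y m d) :
    addDays y m d n ≠ DValue.bot :=
  (wellFormedness_day_addition_general y m d n h).ne_bot
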